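/- Let G be a UD exchange network, let (γ^0, M) be a stable trade outcome, and let κ ∈ (0, 1/2]. Define the Edge Rebalancing iteration γ^{t+1} := κ γ^reb(γ^t) + (1−κ) γ^t, where γ^reb(γ) is defined by γ^reb_i := max_{k∈∂i∖j}(w_{ik}−γ_k)_+ + r_{ij}·Surp_{ij}(γ) for each (i,j)∈M (and symmetrically for j), and γ^reb_i := 0 for nodes i unmatched in M. Then for every t ≥ 0, (γ^t, M) is a stable trade outcome. -/

import Mathlib

namespace EN

open Finset

variable {V : Type*}

/-- The nonnegative part `(x)₊ = max (x, 0)`. -/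
noncomputable def pos (x : ℝ) : ℝ := max x 0

variable [Fintype V] [DecidableEq V]

/-- The maximum of `f` over a finite set of vertices (`0` over the empty set). -/
noncomputable def fmax (s : Finset V) (f : V → ℝ) : ℝ := ⨆ k ∈ s, f k

/-- The offer from `i` to `j` given messages `α` and weights `w`:
`m_{i→j} = (w_{ij} − α_{i\j})₊ − (1/2) (w_{ij} − α_{i\j} − α_{j\i})₊`. -/
noncomputable def offer (w α : V → V → ℝ) (i j : V) : ℝ :=
  pos (w i j - α i j) - (1 / 2) * pos (w i j - α i j - α j i)

/-- The update operator `T` of the natural dynamics: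
`(Tα)_{i\j} = max_{k ∈ ∂i \ j} m_{k→i}`. -/
noncomputable def upd (G : SimpleGraph V) [DecidableRel G.Adj] (w α : V → V → ℝ)
    (i j : V) : ℝ :=
  fmax ((G.neighborFinset i).erase j) fun k => offer w α k i

/-- The earnings estimate `γ_i = max_{k ∈ ∂i} m_{k→i}`. -/
noncomputable def earn (G : SimpleGraph V) [DecidableRel G.Adj] (w α : V → V → ℝ)
    (i : V) : ℝ :=
  fmax (G.neighborFinset i) fun k => offer w α k i

/-- Exchange network weights: symmetric and positive on every edge. -/
def GoodW (G : SimpleGraph V) (w : V → V → ℝ) : Prop :=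
  (∀ i j, w i j = w j i) ∧ ∀ i j, G.Adj i j → 0 < w i j

/-- A valid message vector: nonnegative on all directed edges. -/
def ValidMsg (G : SimpleGraph V) (α : V → V → ℝ) : Prop :=
  ∀ i j, G.Adj i j → 0 ≤ α i j

/-- Fixed point of the natural-dynamics update operator. -/
def IsFixedPt (G : SimpleGraph V) [DecidableRel G.Adj] (w α : V → V → ℝ) : Prop :=
  ∀ i j, G.Adj i j → upd G w α i j = α i j

/-- `ε`-fixed point. -/
def IsEpsFixedPt (G : SimpleGraph V) [DecidableRel G.Adj] (w α : V → V → ℝ) (ε : ℝ) : Prop :=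
  ∀ i j, G.Adj i j → |α i j - upd G w α i j| ≤ ε

/-- The natural dynamics with damping factor `κ`: `α^{t+1} = (1−κ) α^t + κ T α^t`. -/
noncomputable def dyn (G : SimpleGraph V) [DecidableRel G.Adj] (w : V → V → ℝ) (κ : ℝ)
    (α0 : V → V → ℝ) : ℕ → V → V → ℝ
  | 0 => α0
  | t + 1 => fun i j =>
      (1 - κ) * dyn G w κ α0 t i j + κ * upd G w (dyn G w κ α0 t) i j

/-- Sup norm over directed edges. -/
noncomputable def msgSup (G : SimpleGraph V) [DecidableRel G.Adj] (f : V → V → ℝ) : ℝ :=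
  ⨆ p : V × V, if G.Adj p.1 p.2 then |f p.1 p.2| else 0

/-- `M` is a matching of `G`: a symmetric subrelation of adjacency pairing each node
with at most one partner. -/
structure IsMatching (G : SimpleGraph V) (M : V → V → Prop) : Prop where
  subset : ∀ i j, M i j → G.Adj i j
  symm : ∀ i j, M i j → M j i
  unique : ∀ i j k, M i j → M i k → j = k

/-- `(M, γ)` is a trade outcome. -/
def IsOutcome (G : SimpleGraph V) (w : V → V → ℝ) (M : V → V → Prop) (γ : V → ℝ) : Prop :=
  IsMatching G M ∧ (∀ i, 0 ≤ γ i) ∧ (∀ i j, M i j → γ i + γ j = w i j) ∧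
    ∀ i, (∀ j, ¬M i j) → γ i = 0

/-- Stability of an outcome. -/
def Stable (G : SimpleGraph V) (w : V → V → ℝ) (M : V → V → Prop) (γ : V → ℝ) : Prop :=
  ∀ i j, G.Adj i j → ¬M i j → w i j ≤ γ i + γ j

/-- The best alternative of `i` excluding `j`: `max_{k ∈ ∂i \ j} (w_{ik} − γ_k)₊`. -/
noncomputable def bestAlt (G : SimpleGraph V) [DecidableRel G.Adj] (w : V → V → ℝ)
    (γ : V → ℝ) (i j : V) : ℝ :=
  fmax ((G.neighborFinset i).erase j) fun k => pos (w i k - γ k)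

/-- Balance of an outcome. -/
def Balanced (G : SimpleGraph V) [DecidableRel G.Adj] (w : V → V → ℝ) (M : V → V → Prop)
    (γ : V → ℝ) : Prop :=
  ∀ i j, M i j → γ i - bestAlt G w γ i j = γ j - bestAlt G w γ j i

/-- Nash bargaining solution: a stable and balanced trade outcome. -/
def IsNBSolution (G : SimpleGraph V) [DecidableRel G.Adj] (w : V → V → ℝ)
    (M : V → V → Prop) (γ : V → ℝ) : Prop :=
  IsOutcome G w M γ ∧ Stable G w M γ ∧ Balanced G w M γ

/-- `ε`-balance. -/
def EpsBalanced (G : SimpleGraph V) [DecidableRel G.Adj] (w : V → V → ℝ)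
    (M : V → V → Prop) (γ : V → ℝ) (ε : ℝ) : Prop :=
  ∀ i j, M i j → |(γ i - bestAlt G w γ i j) - (γ j - bestAlt G w γ j i)| ≤ ε

/-- `ε`-Nash bargaining solution. -/
def IsEpsNB (G : SimpleGraph V) [DecidableRel G.Adj] (w : V → V → ℝ)
    (M : V → V → Prop) (γ : V → ℝ) (ε : ℝ) : Prop :=
  IsOutcome G w M γ ∧ Stable G w M γ ∧ EpsBalanced G w M γ ε

/-- Feasible point of the LP relaxation of maximum weight matching. -/
def LPFeasible (G : SimpleGraph V) [DecidableRel G.Adj] (x : V → V → ℝ) : Prop :=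
  (∀ i j, x i j = x j i) ∧ (∀ i j, 0 ≤ x i j) ∧ (∀ i j, ¬G.Adj i j → x i j = 0) ∧
    ∀ i, ∑ j ∈ G.neighborFinset i, x i j ≤ 1

/-- LP objective `Σ_{(i,j)∈E} w_{ij} x_{ij}` (each undirected edge counted once). -/
noncomputable def LPval (G : SimpleGraph V) [DecidableRel G.Adj] (w x : V → V → ℝ) : ℝ :=
  (1 / 2) * ∑ i, ∑ j ∈ G.neighborFinset i, w i j * x i j

/-- Optimal point of the LP relaxation of maximum weight matching. -/
def LPOptimal (G : SimpleGraph V) [DecidableRel G.Adj] (w x : V → V → ℝ) : Prop :=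
  LPFeasible G x ∧ ∀ y, LPFeasible G y → LPval G w y ≤ LPval G w x

def Integral (x : V → V → ℝ) : Prop := ∀ i j, x i j = 0 ∨ x i j = 1

def HalfIntegral (x : V → V → ℝ) : Prop := ∀ i j, x i j = 0 ∨ x i j = 1 / 2 ∨ x i j = 1

open Classical in
/-- The LP point associated to a matching. -/
noncomputable def mInd (M : V → V → Prop) (i j : V) : ℝ := if M i j then 1 else 0

/-- The state with offers `m` induces the matching `M`: every node receiving a positive
offer is matched and receives its unique best offer from its partner, and every node
with zero earnings is unmatched. -/
def Induces (G : SimpleGraph V) [DecidableRel G.Adj] (m : V → V → ℝ)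
    (M : V → V → Prop) : Prop :=
  IsMatching G M ∧
    (∀ i, (∃ k, G.Adj i k ∧ 0 < m k i) →
      ∃ j, M i j ∧ ∀ k, G.Adj i k → k ≠ j → m k i < m j i) ∧
    ∀ i, (fmax (G.neighborFinset i) fun k => m k i) = 0 → ∀ j, ¬M i j

/-- Feasibility for the dual LP. -/
def DualFeasible (G : SimpleGraph V) (w : V → V → ℝ) (y : V → ℝ) : Prop :=
  (∀ i, 0 ≤ y i) ∧ ∀ i j, G.Adj i j → w i j ≤ y i + y j

/-- Optimality for the dual LP. -/
def DualOptimal (G : SimpleGraph V) (w : V → V → ℝ) (y : V → ℝ) : Prop :=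
  DualFeasible G w y ∧ ∀ z, DualFeasible G w z → ∑ i, y i ≤ ∑ i, z i

/-- The unmatched balance property at every edge. -/
def UnmatchedBalance (G : SimpleGraph V) [DecidableRel G.Adj] (w : V → V → ℝ)
    (y : V → ℝ) : Prop :=
  ∀ i j, G.Adj i j → y i - bestAlt G w y i j = y j - bestAlt G w y j i

/-! ### Unequal division -/

/-- Valid split fractions: `r_{ij} ∈ (0,1)` with `r_{ij} + r_{ji} = 1` on every edge. -/
def GoodR (G : SimpleGraph V) (r : V → V → ℝ) : Prop :=
  ∀ i j, G.Adj i j → 0 < r i j ∧ r i j < 1 ∧ r i j + r j i = 1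

/-- The UD offer from `i` to `j`. -/
noncomputable def offerUD (w r α : V → V → ℝ) (i j : V) : ℝ :=
  pos (w i j - α i j) - r i j * pos (w i j - α i j - α j i)

/-- The UD update operator. -/
noncomputable def updUD (G : SimpleGraph V) [DecidableRel G.Adj] (w r α : V → V → ℝ)
    (i j : V) : ℝ :=
  fmax ((G.neighborFinset i).erase j) fun k => offerUD w r α k i

/-- The UD earnings estimate. -/
noncomputable def earnUD (G : SimpleGraph V) [DecidableRel G.Adj] (w r α : V → V → ℝ)
    (i : V) : ℝ :=
  fmax (G.neighborFinset i) fun k => offerUD w r α k i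

/-- Fixed point of the UD update operator. -/
def IsFixedPtUD (G : SimpleGraph V) [DecidableRel G.Adj] (w r α : V → V → ℝ) : Prop :=
  ∀ i j, G.Adj i j → updUD G w r α i j = α i j

/-- Correct division. -/
def CorrectDiv (G : SimpleGraph V) [DecidableRel G.Adj] (w r : V → V → ℝ)
    (M : V → V → Prop) (γ : V → ℝ) : Prop :=
  ∀ i j, M i j →
    (1 / r i j) * (γ i - bestAlt G w γ i j) = (1 / r j i) * (γ j - bestAlt G w γ j i)

/-- UD solution: a stable trade outcome satisfying correct division. -/
def IsUDSolution (G : SimpleGraph V) [DecidableRel G.Adj] (w r : V → V → ℝ)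
    (M : V → V → Prop) (γ : V → ℝ) : Prop :=
  IsOutcome G w M γ ∧ Stable G w M γ ∧ CorrectDiv G w r M γ

/-- Edge surplus. -/
noncomputable def surp (G : SimpleGraph V) [DecidableRel G.Adj] (w : V → V → ℝ)
    (γ : V → ℝ) (i j : V) : ℝ :=
  w i j - bestAlt G w γ i j - bestAlt G w γ j i

open Classical in
/-- The rebalanced allocation `γ^reb`. -/
noncomputable def reb (G : SimpleGraph V) [DecidableRel G.Adj] (w r : V → V → ℝ)
    (M : V → V → Prop) (γ : V → ℝ) (i : V) : ℝ :=
  if h : ∃ j, M i j then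
    bestAlt G w γ i h.choose + r i h.choose * surp G w γ i h.choose
  else 0

/-- The Edge Rebalancing iteration `γ^{t+1} = κ γ^reb(γ^t) + (1−κ) γ^t`. -/
noncomputable def rebIter (G : SimpleGraph V) [DecidableRel G.Adj] (w r : V → V → ℝ)
    (M : V → V → Prop) (κ : ℝ) (γ0 : V → ℝ) : ℕ → V → ℝ
  | 0 => γ0
  | t + 1 => fun i =>
      κ * reb G w r M (rebIter G w r M κ γ0 t) i + (1 - κ) * rebIter G w r M κ γ0 t i

theorem fmax_nonneg {V : Type*} (s : Finset V) (f : V → ℝ) (hf : ∀ k, 0 ≤ f k) :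
    0 ≤ fmax s f :=
  Real.iSup_nonneg fun k => Real.iSup_nonneg fun _ => hf k

theorem fmax_le {V : Type*} (s : Finset V) (f : V → ℝ) (c : ℝ) (hc : 0 ≤ c)
    (h : ∀ k ∈ s, f k ≤ c) : fmax s f ≤ c :=
  Real.iSup_le (fun k => Real.iSup_le (fun hk => h k hk) hc) hc

theorem le_fmax {V : Type*} [Finite V] (s : Finset V) (f : V → ℝ) (k : V) (hk : k ∈ s) :
    f k ≤ fmax s f := by
  have h := le_ciSup (f := fun k => ⨆ _ : k ∈ s, f k) (Set.finite_range _).bddAbove k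
  have e : (⨆ _ : k ∈ s, f k) = f k := by
    haveI : Nonempty (k ∈ s) := ⟨hk⟩
    exact ciSup_const
  unfold fmax
  linarith [h, e.symm.le]

theorem pos_nonneg' (x : ℝ) : 0 ≤ pos x := le_max_right _ _

theorem le_pos' (x : ℝ) : x ≤ pos x := le_max_left _ _

theorem reb_matched {V : Type*} [Fintype V] [DecidableEq V] (G : SimpleGraph V)
    [DecidableRel G.Adj] (w r : V → V → ℝ) (M : V → V → Prop) (γ : V → ℝ)
    (hM : IsMatching G M) (i j : V) (hij : M i j) :
    reb G w r M γ i = bestAlt G w γ i j + r i j * surp G w γ i j := by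
  have h : ∃ j, M i j := ⟨j, hij⟩
  have e : h.choose = j := hM.unique _ _ _ h.choose_spec hij
  unfold reb
  rw [dif_pos h, e]

theorem reb_unmatched {V : Type*} [Fintype V] [DecidableEq V] (G : SimpleGraph V)
    [DecidableRel G.Adj] (w r : V → V → ℝ) (M : V → V → Prop) (γ : V → ℝ)
    (i : V) (hi : ∀ j, ¬ M i j) : reb G w r M γ i = 0 := by
  unfold reb
  rw [dif_neg (by push Not; exact hi)]

theorem reb_step {V : Type*} [Fintype V] [DecidableEq V] (G : SimpleGraph V)
    [DecidableRel G.Adj] (w : V → V → ℝ) (hw : GoodW G w) (r : V → V → ℝ) (hr : GoodR G r)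
    (M : V → V → Prop) (γ : V → ℝ) (h0 : IsOutcome G w M γ ∧ Stable G w M γ)
    (κ : ℝ) (hκ : κ ∈ Set.Ioc (0 : ℝ) (1 / 2)) :
    IsOutcome G w M (fun i => κ * reb G w r M γ i + (1 - κ) * γ i) ∧
      Stable G w M (fun i => κ * reb G w r M γ i + (1 - κ) * γ i) := by
  obtain ⟨⟨hM, hγ, hs, hu⟩, hst⟩ := h0
  obtain ⟨hκ0, hκ1⟩ := hκ
  have ha0 : ∀ i j, 0 ≤ bestAlt G w γ i j := fun i j => fmax_nonneg _ _ fun k => pos_nonneg' _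
  have hale : ∀ i j, M i j → bestAlt G w γ i j ≤ γ i := by
    intro i j hij
    refine fmax_le _ _ _ (hγ i) ?_
    intro k hk
    rw [Finset.mem_erase, SimpleGraph.mem_neighborFinset] at hk
    have := hst i k hk.2 (fun h => hk.1 (hM.unique _ _ _ h hij))
    exact max_le (by linarith) (hγ i)
  have hreb : ∀ i j, M i j → bestAlt G w γ i j ≤ reb G w r M γ i := by
    intro i j hij
    rw [reb_matched G w r M γ hM i j hij]
    have h1 := hale i j hij
    have h2 := hale j i (hM.symm _ _ hij)
    have h3 := hs i j hij
    have h4 : 0 ≤ surp G w γ i j := by unfold surp; linarith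
    have h5 := mul_nonneg (hr i j (hM.subset _ _ hij)).1.le h4
    linarith
  have hreb0 : ∀ i, 0 ≤ reb G w r M γ i := by
    intro i
    by_cases h : ∃ j, M i j
    · obtain ⟨j, hij⟩ := h
      exact (ha0 i j).trans (hreb i j hij)
    · push Not at h
      rw [reb_unmatched G w r M γ i h]
  have hkey : ∀ i k, G.Adj i k → ¬ M i k → w i k - γ k ≤ reb G w r M γ i := by
    intro i k hik hn
    by_cases h : ∃ j, M i j
    · obtain ⟨j, hij⟩ := h
      refine le_trans ?_ (hreb i j hij)
      refine (le_pos' _).trans (le_fmax _ (fun k => pos (w i k - γ k)) k ?_)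
      rw [Finset.mem_erase, SimpleGraph.mem_neighborFinset]
      exact ⟨fun e => hn (e ▸ hij), hik⟩
    · push Not at h
      rw [reb_unmatched G w r M γ i h]
      have := hst i k hik hn
      rw [hu i h] at this
      linarith
  refine ⟨⟨hM, fun i => ?_, fun i j hij => ?_, fun i hi => ?_⟩, fun i k hik hn => ?_⟩
  · have := hγ i
    have := hreb0 i
    have : 0 ≤ 1 - κ := by linarith
    positivity
  · have h3 := hs i j hij
    have h4 := (hr i j (hM.subset _ _ hij)).2.2
    have h5 : r j i = 1 - r i j := by linarith
    have e : γ j = w i j - γ i := by linarith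
    simp only [reb_matched G w r M γ hM i j hij, reb_matched G w r M γ hM j i (hM.symm _ _ hij),
      surp, hw.1 j i, h5, e]
    ring
  · simp [reb_unmatched G w r M γ i hi, hu i hi]
  · have h1 := hkey i k hik hn
    have h2 := hkey k i hik.symm (fun h => hn (hM.symm _ _ h))
    rw [hw.1 k i] at h2
    have h3 := hst i k hik hn
    simp only
    nlinarith [mul_le_mul_of_nonneg_left h1 hκ0.le, mul_le_mul_of_nonneg_left h2 hκ0.le,
      mul_le_mul_of_nonneg_left h3 (by linarith : 0 ≤ 1 - 2 * κ)]

/-- The Edge Rebalancing iteration, started from a stable trade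
outcome and run with damping `κ ∈ (0, 1/2]`, keeps the outcome a stable trade
outcome at every time `t`. -/
theorem edge_rebalancing_preserves_stability
    {V : Type*} [Fintype V] [DecidableEq V] (G : SimpleGraph V) [DecidableRel G.Adj]
    (w : V → V → ℝ) (hw : GoodW G w) (r : V → V → ℝ) (hr : GoodR G r)
    (M : V → V → Prop) (γ0 : V → ℝ)
    (h0 : IsOutcome G w M γ0 ∧ Stable G w M γ0)
    (κ : ℝ) (hκ : κ ∈ Set.Ioc (0 : ℝ) (1 / 2)) :
    ∀ t : ℕ, IsOutcome G w M (rebIter G w r M κ γ0 t) ∧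
      Stable G w M (rebIter G w r M κ γ0 t) := by
  intro t
  induction t with
  | zero => exact h0
  | succ t ih => exact reb_step G w hw r hr M _ ih κ hκ
end EN
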